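/- Let W ∈ 𝒲. Then W is weakly isomorphic to a monotone decreasing 0–1 valued graphon if and only if W(x₁,x₂)(1 − W(x₂,x₃))W(x₃,x₄)(1 − W(x₄,x₁)) = 0 for almost every (x₁,x₂,x₃,x₄) ∈ [0,1]⁴. Moreover, if W ∈ 𝒲₀, then this is equivalent to the single equation ∫_{[0,1]⁴} W(x₁,x₂)(1 − W(x₂,x₃))W(x₃,x₄)(1 − W(x₄,x₁)) dx₁dx₂dx₃dx₄ = 0. -/

import Mathlib

open MeasureTheory
open scoped Classical

noncomputable section

/-- The unit interval `[0,1]` as a subset of `ℝ`. -/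
def I01 : Set ℝ := Set.Icc 0 1

/-- The cube `[0,1]^n`. -/
def cube (n : ℕ) : Set (Fin n → ℝ) := Set.univ.pi fun _ => I01

/-- `W` belongs to `𝒲`: a bounded symmetric measurable function on `[0,1]²`. -/
def memW (W : ℝ → ℝ → ℝ) : Prop :=
  Measurable (Function.uncurry W) ∧
  (∀ x ∈ I01, ∀ y ∈ I01, W x y = W y x) ∧
  ∃ C : ℝ, ∀ x ∈ I01, ∀ y ∈ I01, |W x y| ≤ C

/-- `W` belongs to `𝒲₀`: a graphon, i.e. symmetric measurable with values in `[0,1]`. -/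
def memW0 (W : ℝ → ℝ → ℝ) : Prop :=
  Measurable (Function.uncurry W) ∧
  (∀ x ∈ I01, ∀ y ∈ I01, W x y = W y x) ∧
  ∀ x ∈ I01, ∀ y ∈ I01, W x y ∈ Set.Icc (0 : ℝ) 1

/-- Homomorphism density `t(F,W)` of a finite simple graph `F` in `W`. -/
def homDensity {n : ℕ} (F : SimpleGraph (Fin n)) (W : ℝ → ℝ → ℝ) : ℝ :=
  ∫ x in cube n,
    ∏ p ∈ Finset.univ.filter (fun p : Fin n × Fin n => p.1 < p.2 ∧ F.Adj p.1 p.2),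
      W (x p.1) (x p.2)

/-- Two kernels are weakly isomorphic if all their homomorphism densities agree. -/
def WeaklyIsomorphic (U W : ℝ → ℝ → ℝ) : Prop :=
  ∀ (n : ℕ) (F : SimpleGraph (Fin n)), homDensity F U = homDensity F W

/-- `W` is finitely forcible within the class `A`. -/
def FinitelyForcible (A : (ℝ → ℝ → ℝ) → Prop) (W : ℝ → ℝ → ℝ) : Prop :=
  A W ∧ ∃ (k : ℕ) (n : Fin k → ℕ) (F : ∀ i, SimpleGraph (Fin (n i))),
    ∀ U, A U → (∀ i, homDensity (F i) U = homDensity (F i) W) → WeaklyIsomorphic U W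

/-- Density function `t^k(F,W)` of a `k`-labeled graph, as a function of the
labeled variables; the graph has `k` labeled and `m` unlabeled vertices. -/
def labDensity {k m : ℕ} (F : SimpleGraph (Fin (k + m))) (W : ℝ → ℝ → ℝ)
    (x : Fin k → ℝ) : ℝ :=
  ∫ y in cube m,
    ∏ p ∈ Finset.univ.filter
        (fun p : Fin (k + m) × Fin (k + m) => p.1 < p.2 ∧ F.Adj p.1 p.2),
      W (Fin.append x y p.1) (Fin.append x y p.2)

/-- A monotone decreasing 0–1 valued graphon. -/
def MonotoneDecr01 (U : ℝ → ℝ → ℝ) : Prop :=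
  Measurable (Function.uncurry U) ∧
  (∀ x ∈ I01, ∀ y ∈ I01, U x y = U y x) ∧
  (∀ x ∈ I01, ∀ y ∈ I01, U x y = 0 ∨ U x y = 1) ∧
  (∀ x x' y y' : ℝ, x ∈ I01 → x' ∈ I01 → y ∈ I01 → y' ∈ I01 →
    x ≤ x' → y ≤ y' → U x' y' ≤ U x y)

/-!
For the forward implication, moments `∫ p(W)²` of polynomials in the edge values `W (x_i, x_j)` are
linear combinations of densities of multigraphs, so it suffices that densities of simple graphs
determine those of loopless multigraphs. Replacing an edge by a path of length `k + 1` amounts to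
decorating it with the `k`-th iterate of `W` under composition with `W`, and after subdividing all
repeated edges the graph is simple. With `T` the integral operator of `W`, the averages of the
powers of `1 - T² / M²` are polynomials in `T` with constant coefficient `1` which converge to the
projection onto `ker T`. The rows of `W` are orthogonal to `ker T`, so the density with the edge
itself is a limit of combinations of densities with the edge subdivided.

Conversely, if alternating four-cycles have density zero, then `W` is almost everywhere `0` or `1`
and the sets `{y | W (x, y) = 1}` are nested up to null sets. Ordering the points by the measure of
the complements of these sets turns `W` into a threshold kernel, and the quantile function of the
law of this measure rearranges that kernel monotonically on the unit interval.
-/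

open Filter Polynomial Set
open scoped InnerProductSpace Topology unitInterval

/-! ### Mean ergodic polynomials -/

lemma comp_aeval_of_comp_eq {R V V' : Type*} [CommSemiring R] [AddCommMonoid V] [AddCommMonoid V']
    [Module R V] [Module R V'] {φ : V →ₗ[R] V'} {A : Module.End R V} {B : Module.End R V'}
    (h : φ ∘ₗ A = B ∘ₗ φ) (p : R[X]) (v : V) : φ (aeval A p v) = aeval B p (φ v) := by
  have hpow (k : ℕ) : φ ((A ^ k) v) = (B ^ k) (φ v) :=
    LinearMap.congr_fun (Module.End.commute_pow_left_of_commute h.symm k).symm v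
  simp only [aeval_eq_sum_range, LinearMap.sum_apply, LinearMap.smul_apply, map_sum, map_smul,
    hpow]

/-- The averages of the powers of `1 - X² / M²`. For a self-adjoint operator `T` of norm at most `M`
their values at `T` converge strongly to the projection onto `ker T`, while their constant
coefficient stays equal to `1`. -/
def ergodicPolynomial (M : ℝ) (N : ℕ) : ℝ[X] :=
  (N + 1 : ℝ)⁻¹ • ∑ k ∈ Finset.range (N + 1), (1 - M⁻¹ ^ 2 • X ^ 2) ^ k

lemma coeff_zero_ergodicPolynomial (M : ℝ) (N : ℕ) : (ergodicPolynomial M N).coeff 0 = 1 := by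
  have hN : (N + 1 : ℝ) ≠ 0 := by positivity
  simp [ergodicPolynomial, coeff_zero_eq_eval_zero, eval_finsetSum, hN]

section SelfAdjoint

variable {H : Type*} [NormedAddCommGroup H] [InnerProductSpace ℝ H] {T : H →L[ℝ] H} {M : ℝ}

lemma norm_one_sub_smul_sq_apply_le (hT : (T : H →ₗ[ℝ] H).IsSymmetric) (hM : ‖T‖ ≤ M)
    (hM₀ : 0 < M) (x : H) : ‖(1 - M⁻¹ ^ 2 • T ^ 2 : H →L[ℝ] H) x‖ ≤ ‖x‖ := by
  have hinner : ⟪x, T (T x)⟫_ℝ = ‖T x‖ ^ 2 := by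
    rw [← real_inner_self_eq_norm_sq]
    exact (hT x (T x)).symm
  have hnorm : M⁻¹ * ‖T (T x)‖ ≤ ‖T x‖ := by
    rw [inv_mul_le_iff₀ hM₀]
    exact T.le_of_opNorm_le hM _
  refine le_of_sq_le_sq ?_ (norm_nonneg x)
  calc ‖(1 - M⁻¹ ^ 2 • T ^ 2 : H →L[ℝ] H) x‖ ^ 2
      = ‖x - M⁻¹ ^ 2 • T (T x)‖ ^ 2 := rfl
    _ = ‖x‖ ^ 2 - 2 * (M⁻¹ ^ 2 * ‖T x‖ ^ 2) + M⁻¹ ^ 2 * (M⁻¹ * ‖T (T x)‖) ^ 2 := by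
        rw [norm_sub_sq_real, inner_smul_right, hinner, norm_smul, norm_pow, norm_inv,
          Real.norm_of_nonneg hM₀.le]
        ring
    _ ≤ ‖x‖ ^ 2 - 2 * (M⁻¹ ^ 2 * ‖T x‖ ^ 2) + M⁻¹ ^ 2 * ‖T x‖ ^ 2 := by gcongr
    _ ≤ ‖x‖ ^ 2 := by nlinarith [sq_nonneg (M⁻¹ * ‖T x‖)]

lemma one_sub_smul_sq_apply_eq_self_iff (hT : (T : H →ₗ[ℝ] H).IsSymmetric) (hM₀ : 0 < M) {x : H} :
    (1 - M⁻¹ ^ 2 • T ^ 2 : H →L[ℝ] H) x = x ↔ T x = 0 := by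
  have hsub : (1 - M⁻¹ ^ 2 • T ^ 2 : H →L[ℝ] H) x = x - M⁻¹ ^ 2 • T (T x) := rfl
  rw [hsub, sub_eq_self, smul_eq_zero_iff_right (by positivity)]
  refine ⟨fun h => ?_, fun h => by rw [h, map_zero]⟩
  rw [← inner_self_eq_zero (𝕜 := ℝ)]
  exact (hT x (T x)).trans (h ▸ inner_zero_right x)

lemma aeval_ergodicPolynomial_apply (M : ℝ) (N : ℕ) (x : H) :
    aeval (T : H →ₗ[ℝ] H) (ergodicPolynomial M N) x =
      birkhoffAverage ℝ (1 - M⁻¹ ^ 2 • T ^ 2 : H →L[ℝ] H) id (N + 1) x := by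
  have hpow (k : ℕ) : ((1 - M⁻¹ ^ 2 • (T : H →ₗ[ℝ] H) ^ 2 : Module.End ℝ H) ^ k) x =
      (1 - M⁻¹ ^ 2 • T ^ 2 : H →L[ℝ] H)^[k] x := by
    rw [Module.End.pow_apply]
    rfl
  simp only [ergodicPolynomial, map_smul, map_sum, map_pow, map_sub, map_one, aeval_X,
    LinearMap.smul_apply, LinearMap.sum_apply, hpow, birkhoffAverage, birkhoffSum, id,
    Nat.cast_add, Nat.cast_one]

lemma norm_aeval_ergodicPolynomial_apply_le (hT : (T : H →ₗ[ℝ] H).IsSymmetric) (hM : ‖T‖ ≤ M)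
    (hM₀ : 0 < M) (N : ℕ) (x : H) : ‖aeval (T : H →ₗ[ℝ] H) (ergodicPolynomial M N) x‖ ≤ ‖x‖ := by
  have hiter (k : ℕ) : ‖(1 - M⁻¹ ^ 2 • T ^ 2 : H →L[ℝ] H)^[k] x‖ ≤ ‖x‖ := by
    induction k with
    | zero => rfl
    | succ k ih =>
      rw [Function.iterate_succ_apply']
      exact (norm_one_sub_smul_sq_apply_le hT hM hM₀ _).trans ih
  rw [aeval_ergodicPolynomial_apply, birkhoffAverage, norm_smul, norm_inv, RCLike.norm_natCast,
    inv_mul_le_iff₀ (by positivity)]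
  exact (norm_sum_le_of_le _ fun k _ => hiter k).trans (by simp)

lemma tendsto_aeval_ergodicPolynomial_apply [CompleteSpace H]
    (hT : (T : H →ₗ[ℝ] H).IsSymmetric) (hM : ‖T‖ ≤ M) (hM₀ : 0 < M) {x : H}
    (hx : x ∈ (LinearMap.ker (T : H →ₗ[ℝ] H))ᗮ) :
    Tendsto (fun N => aeval (T : H →ₗ[ℝ] H) (ergodicPolynomial M N) x) atTop (𝓝 0) := by
  set S : H →L[ℝ] H := 1 - M⁻¹ ^ 2 • T ^ 2
  have hS : ‖S‖ ≤ 1 := S.opNorm_le_bound zero_le_one fun y => by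
    rw [one_mul]
    exact norm_one_sub_smul_sq_apply_le hT hM hM₀ y
  have hker : (S : H →ₗ[ℝ] H).eqLocus (1 : H →L[ℝ] H) = LinearMap.ker (T : H →ₗ[ℝ] H) := by
    ext y
    exact one_sub_smul_sq_apply_eq_self_iff hT hM₀
  have hproj : ((S : H →ₗ[ℝ] H).eqLocus (1 : H →L[ℝ] H)).orthogonalProjectionOnto x = 0 :=
    Submodule.orthogonalProjectionOnto_eq_zero_iff.2 (hker ▸ hx)
  have hlim := S.tendsto_birkhoffAverage_orthogonalProjection hS x
  rw [hproj] at hlim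
  simp only [aeval_ergodicPolynomial_apply]
  exact hlim.comp (tendsto_add_atTop_nat 1)

end SelfAdjoint

/-! ### Bounded measurable functions and kernel operators -/

/-- The algebra of bounded measurable real functions on `α`. Kernels, which are considered
everywhere and not just almost everywhere, are the elements of `boundedMeasurable (α × α)`. -/
def boundedMeasurable (α : Type*) [MeasurableSpace α] : Subalgebra ℝ (α → ℝ) where
  carrier := {f | Measurable f ∧ ∃ C, ∀ a, |f a| ≤ C}
  mul_mem' := by
    rintro f g ⟨hf, C, hC⟩ ⟨hg, D, hD⟩
    refine ⟨hf.mul hg, C * D, fun a => ?_⟩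
    rw [Pi.mul_apply, abs_mul]
    exact mul_le_mul (hC a) (hD a) (abs_nonneg _) ((abs_nonneg _).trans (hC a))
  add_mem' := by
    rintro f g ⟨hf, C, hC⟩ ⟨hg, D, hD⟩
    exact ⟨hf.add hg, C + D, fun a => (abs_add_le _ _).trans (add_le_add (hC a) (hD a))⟩
  algebraMap_mem' r := ⟨measurable_const, |r|, fun _ => le_rfl⟩

namespace boundedMeasurable

variable {α β : Type*} [MeasurableSpace α] [MeasurableSpace β]

instance : CoeFun (boundedMeasurable α) fun _ => α → ℝ := ⟨Subtype.val⟩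

lemma measurable (f : boundedMeasurable α) : Measurable f := f.2.1

/-- The supremum of `|f|`. -/
def bound (f : boundedMeasurable α) : ℝ := ⨆ a, |f a|

lemma abs_le_bound (f : boundedMeasurable α) (a : α) : |f a| ≤ bound f :=
  have ⟨C, hC⟩ := f.2.2
  le_ciSup (f := fun a => |f a|) ⟨C, forall_mem_range.2 hC⟩ a

lemma bound_nonneg (f : boundedMeasurable α) : 0 ≤ bound f := Real.iSup_nonneg fun _ => abs_nonneg _

lemma memLp (f : boundedMeasurable α) (p : ENNReal) (μ : Measure α) [IsFiniteMeasure μ] :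
    MemLp f p μ :=
  .of_bound (measurable f).aestronglyMeasurable (bound f) (ae_of_all _ (abs_le_bound f))

lemma integrable (f : boundedMeasurable α) (μ : Measure α) [IsFiniteMeasure μ] : Integrable f μ :=
  memLp_one_iff_integrable.1 (memLp f 1 μ)

/-- Composition with a measurable map. -/
def comap (g : α → β) (hg : Measurable g) : boundedMeasurable β →ₐ[ℝ] boundedMeasurable α where
  toFun f := ⟨fun a => f (g a), (measurable f).comp hg, bound f, fun a => abs_le_bound f (g a)⟩
  map_one' := rfl
  map_mul' _ _ := rfl
  map_zero' := rfl
  map_add' _ _ := rfl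
  commutes' _ := rfl

/-- The section `f (a, ·)` of a bounded measurable function on a product. -/
def sectionAt (a : α) : boundedMeasurable (α × β) →ₐ[ℝ] boundedMeasurable β :=
  comap (Prod.mk a) measurable_prodMk_left

/-- The partial integral over the second variable. -/
def integralSnd (μ : Measure β) [IsProbabilityMeasure μ] :
    boundedMeasurable (α × β) →ₗ[ℝ] boundedMeasurable α where
  toFun f :=
    { val := fun a => ∫ b, f (a, b) ∂μ
      property := by
        refine ⟨(StronglyMeasurable.integral_prod_right' (f := f)
          (measurable f).stronglyMeasurable).measurable, bound f, fun a => ?_⟩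
        simpa using norm_integral_le_of_norm_le_const (f := fun b => f (a, b))
          (ae_of_all μ fun b => abs_le_bound f (a, b)) }
  map_add' f g := by
    ext a
    exact integral_add (integrable (sectionAt a f) μ) (integrable (sectionAt a g) μ)
  map_smul' c f := by
    ext a
    exact integral_const_mul c _

end boundedMeasurable

section Kernel

variable {α : Type*} [MeasurableSpace α] (μ : Measure α) [IsProbabilityMeasure μ]

/-- The section `K (x, ·)` of a kernel, as an element of `L²`. -/
def kernelRow (x : α) : boundedMeasurable (α × α) →ₗ[ℝ] Lp ℝ 2 μ where
  toFun K := (boundedMeasurable.memLp (boundedMeasurable.sectionAt x K) 2 μ).toLp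
  map_add' _ _ := rfl
  map_smul' _ _ := rfl

lemma coeFn_kernelRow (K : boundedMeasurable (α × α)) (x : α) :
    kernelRow μ x K =ᵐ[μ] fun y => K (x, y) :=
  (boundedMeasurable.memLp (boundedMeasurable.sectionAt x K) 2 μ).coeFn_toLp

lemma inner_kernelRow (K : boundedMeasurable (α × α)) (x : α) (f : Lp ℝ 2 μ) :
    ⟪kernelRow μ x K, f⟫_ℝ = ∫ y, K (x, y) * f y ∂μ := by
  rw [L2.inner_def]
  refine integral_congr_ae ?_
  filter_upwards [coeFn_kernelRow μ K x] with y hy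
  rw [hy, RCLike.inner_apply', conj_trivial]

lemma norm_kernelRow_le (K : boundedMeasurable (α × α)) (x : α) :
    ‖kernelRow μ x K‖ ≤ boundedMeasurable.bound K := by
  have hbound : ∀ᵐ y ∂μ, ‖kernelRow μ x K y‖ ≤ boundedMeasurable.bound K := by
    filter_upwards [coeFn_kernelRow μ K x] with y hy
    exact hy ▸ boundedMeasurable.abs_le_bound K (x, y)
  simpa [measureUnivNNReal] using Lp.norm_le_of_ae_bound (boundedMeasurable.bound_nonneg K) hbound

lemma norm_kernelRow_sq (K : boundedMeasurable (α × α)) (x : α) :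
    ‖kernelRow μ x K‖ ^ 2 = boundedMeasurable.integralSnd μ (K ^ 2) x := by
  rw [← real_inner_self_eq_norm_sq, inner_kernelRow]
  refine integral_congr_ae ?_
  filter_upwards [coeFn_kernelRow μ K x] with y hy
  rw [hy, ← sq]
  rfl

lemma measurable_inner_kernelRow (K : boundedMeasurable (α × α)) (f : Lp ℝ 2 μ) :
    Measurable fun x => ⟪kernelRow μ x K, f⟫_ℝ := by
  have hf := (boundedMeasurable.measurable K).mul
    ((Lp.stronglyMeasurable f).measurable.comp measurable_snd)
  simpa only [inner_kernelRow] using hf.stronglyMeasurable.integral_prod_right.measurable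

lemma norm_inner_kernelRow_le (K : boundedMeasurable (α × α)) (f : Lp ℝ 2 μ) (x : α) :
    ‖⟪kernelRow μ x K, f⟫_ℝ‖ ≤ boundedMeasurable.bound K * ‖f‖ :=
  (norm_inner_le_norm _ _).trans (by gcongr; exact norm_kernelRow_le μ K x)

lemma memLp_inner_kernelRow (K : boundedMeasurable (α × α)) (f : Lp ℝ 2 μ) :
    MemLp (fun x => ⟪kernelRow μ x K, f⟫_ℝ) 2 μ :=
  .of_bound (measurable_inner_kernelRow μ K f).aestronglyMeasurable _
    (ae_of_all _ (norm_inner_kernelRow_le μ K f))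

/-- The integral operator on `L²` with kernel `K`. -/
def integralOperator (K : boundedMeasurable (α × α)) : Lp ℝ 2 μ →L[ℝ] Lp ℝ 2 μ :=
  LinearMap.mkContinuous
    { toFun := fun f => (memLp_inner_kernelRow μ K f).toLp
      map_add' := fun f g => by simp only [inner_add_right]; rfl
      map_smul' := fun c f => by simp only [inner_smul_right]; rfl }
    (boundedMeasurable.bound K) fun f => by
      have hbound : ∀ᵐ x ∂μ, ‖(memLp_inner_kernelRow μ K f).toLp _ x‖ ≤
          boundedMeasurable.bound K * ‖f‖ := by
        filter_upwards [(memLp_inner_kernelRow μ K f).coeFn_toLp] with x hx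
        exact hx ▸ norm_inner_kernelRow_le μ K f x
      simpa [measureUnivNNReal] using Lp.norm_le_of_ae_bound
        (mul_nonneg (boundedMeasurable.bound_nonneg K) (norm_nonneg f)) hbound

lemma coeFn_integralOperator (K : boundedMeasurable (α × α)) (f : Lp ℝ 2 μ) :
    integralOperator μ K f =ᵐ[μ] fun x => ⟪kernelRow μ x K, f⟫_ℝ :=
  (memLp_inner_kernelRow μ K f).coeFn_toLp

variable {μ} in
lemma isSymmetric_integralOperator {W : boundedMeasurable (α × α)}
    (hW : ∀ x y, W (x, y) = W (y, x)) :
    (integralOperator μ W : Lp ℝ 2 μ →ₗ[ℝ] Lp ℝ 2 μ).IsSymmetric := by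
  have hiter (f g : Lp ℝ 2 μ) :
      ⟪integralOperator μ W f, g⟫_ℝ = ∫ x, ∫ y, W (x, y) * (g x * f y) ∂μ ∂μ := by
    rw [L2.inner_def]
    refine integral_congr_ae ?_
    filter_upwards [coeFn_integralOperator μ W f] with x hx
    rw [hx, inner_kernelRow, RCLike.inner_apply', conj_trivial, mul_comm, ← integral_const_mul]
    exact integral_congr_ae (ae_of_all _ fun y => by ring)
  intro f g
  have hint : Integrable (fun p : α × α => W p * (g p.1 * f p.2)) (μ.prod μ) :=
    (((Lp.memLp g).integrable one_le_two).mul_prod ((Lp.memLp f).integrable one_le_two)).bdd_mul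
      (boundedMeasurable.measurable W).aestronglyMeasurable
      (ae_of_all _ (boundedMeasurable.abs_le_bound W))
  rw [ContinuousLinearMap.coe_coe, hiter, real_inner_comm, hiter, integral_integral_swap hint]
  simp only [hW, mul_comm]

/-- The composition `K ↦ K ∘ W` of kernels: `(x, y) ↦ ∫ K (x, z) W (z, y) dz`. -/
def compRight (W : boundedMeasurable (α × α)) : Module.End ℝ (boundedMeasurable (α × α)) :=
  boundedMeasurable.integralSnd μ ∘ₗ
    LinearMap.mulRight ℝ (boundedMeasurable.comap (fun q : (α × α) × α => (q.2, q.1.2))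
      (by fun_prop) W) ∘ₗ
    (boundedMeasurable.comap (fun q : (α × α) × α => (q.1.1, q.2)) (by fun_prop)).toLinearMap

lemma compRight_apply (W K : boundedMeasurable (α × α)) (p : α × α) :
    compRight μ W K p = ∫ z, K (p.1, z) * W (z, p.2) ∂μ := rfl

variable {μ} in
lemma kernelRow_compRight {W : boundedMeasurable (α × α)} (hW : ∀ x y, W (x, y) = W (y, x))
    (K : boundedMeasurable (α × α)) (x : α) :
    kernelRow μ x (compRight μ W K) = integralOperator μ W (kernelRow μ x K) := by
  refine Lp.ext ?_
  filter_upwards [coeFn_kernelRow μ (compRight μ W K) x,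
    coeFn_integralOperator μ W (kernelRow μ x K)] with y hK hW'
  rw [hK, hW', real_inner_comm, inner_kernelRow, compRight_apply]
  refine integral_congr_ae ?_
  filter_upwards [coeFn_kernelRow μ W y] with z hz
  rw [hz, hW]

variable {μ} in
lemma ae_kernelRow_mem_ker_orthogonal [IsSeparable μ] (W : boundedMeasurable (α × α)) :
    ∀ᵐ x ∂μ, kernelRow μ x W ∈
      (LinearMap.ker (integralOperator μ W : Lp ℝ 2 μ →ₗ[ℝ] Lp ℝ 2 μ))ᗮ := by
  have : Fact ((2 : ENNReal) ≠ ⊤) := ⟨ENNReal.ofNat_ne_top⟩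
  set T := (integralOperator μ W : Lp ℝ 2 μ →ₗ[ℝ] Lp ℝ 2 μ)
  let k := TopologicalSpace.denseSeq (LinearMap.ker T)
  have hk : ∀ᵐ x ∂μ, ∀ n, ⟪kernelRow μ x W, k n⟫_ℝ = 0 := by
    refine ae_all_iff.2 fun n => ?_
    have hzero : integralOperator μ W (k n) = 0 := (k n).2
    filter_upwards [coeFn_integralOperator μ W (k n), Lp.coeFn_zero ℝ 2 μ] with x hx hx₀
    rw [← hx, hzero, hx₀, Pi.zero_apply]
  filter_upwards [hk] with x hx
  have hclosed : IsClosed {f : LinearMap.ker T | ⟪kernelRow μ x W, f⟫_ℝ = 0} :=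
    isClosed_eq (by fun_prop) continuous_const
  have huniv := hclosed.closure_subset_iff.2 (range_subset_iff.2 hx)
  rw [(TopologicalSpace.denseRange_denseSeq _).closure_range] at huniv
  exact (Submodule.mem_orthogonal' _ _).2 fun f hf => huniv (mem_univ ⟨f, hf⟩)

variable {μ} in
theorem tendsto_integral_sq_aeval_ergodicPolynomial [IsSeparable μ]
    {W : boundedMeasurable (α × α)} (hW : ∀ x y, W (x, y) = W (y, x)) {M : ℝ}
    (hM : ‖integralOperator μ W‖ ≤ M) (hM₀ : 0 < M) :
    Tendsto (fun N => ∫ p, aeval (compRight μ W) (ergodicPolynomial M N) W p ^ 2 ∂μ.prod μ)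
      atTop (𝓝 0) := by
  have hT := isSymmetric_integralOperator hW (μ := μ)
  have hrow (N : ℕ) (x : α) : kernelRow μ x (aeval (compRight μ W) (ergodicPolynomial M N) W) =
      aeval (integralOperator μ W : Lp ℝ 2 μ →ₗ[ℝ] Lp ℝ 2 μ) (ergodicPolynomial M N)
        (kernelRow μ x W) :=
    comp_aeval_of_comp_eq (LinearMap.ext fun K => kernelRow_compRight hW K x) _ _
  have hiter (K : boundedMeasurable (α × α)) :
      ∫ p, K p ^ 2 ∂μ.prod μ = ∫ x, ‖kernelRow μ x K‖ ^ 2 ∂μ := by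
    simp only [norm_kernelRow_sq]
    exact integral_prod _ (boundedMeasurable.integrable (K ^ 2) _)
  simp only [hiter]
  rw [← integral_zero α ℝ (μ := μ)]
  refine tendsto_integral_of_dominated_convergence (fun _ => boundedMeasurable.bound W ^ 2)
    (fun N => ?_) (integrable_const _) (fun N => ae_of_all _ fun x => ?_) ?_
  · simp only [norm_kernelRow_sq]
    exact (boundedMeasurable.measurable _).aestronglyMeasurable
  · rw [norm_pow, norm_norm, hrow]
    gcongr
    exact (norm_aeval_ergodicPolynomial_apply_le hT hM hM₀ N _).trans (norm_kernelRow_le μ W x)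
  · filter_upwards [ae_kernelRow_mem_ker_orthogonal W] with x hx
    simpa only [hrow, norm_zero, zero_pow two_ne_zero] using
      ((tendsto_aeval_ergodicPolynomial_apply hT hM hM₀ hx).norm).pow 2

end Kernel

/-! ### Densities of multigraphs -/

lemma measurePreserving_finCons {α : Type*} [MeasurableSpace α] (μ : Measure α) [SigmaFinite μ]
    (n : ℕ) :
    MeasurePreserving (fun q : α × (Fin n → α) => (Fin.cons q.1 q.2 : Fin (n + 1) → α))
      (μ.prod (Measure.pi fun _ => μ)) (Measure.pi fun _ => μ) := by
  convert (measurePreserving_piFinSuccAbove (fun _ : Fin (n + 1) => μ) 0).symm using 1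
  funext q
  simp [MeasurableEquiv.piFinSuccAbove_symm_apply, Fin.insertNthEquiv]

lemma measurePreserving_eval_prodMk {ι α : Type*} [Fintype ι] [MeasurableSpace α] (μ : Measure α)
    [IsProbabilityMeasure μ] {u v : ι} (h : u ≠ v) :
    MeasurePreserving (fun x : ι → α => (x u, x v)) (Measure.pi fun _ => μ) (μ.prod μ) := by
  have hindep : ProbabilityTheory.IndepFun (fun x : ι → α => x u) (fun x => x v)
      (Measure.pi fun _ => μ) :=
    (ProbabilityTheory.iIndepFun_pi (X := fun _ => id) fun _ => aemeasurable_id).indepFun h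
  have heval (w : ι) := (measurePreserving_eval (fun _ : ι => μ) w).map_eq
  refine ⟨by fun_prop, ?_⟩
  rw [(ProbabilityTheory.indepFun_iff_map_prod_eq_prod_map_map
    (measurable_pi_apply u).aemeasurable (measurable_pi_apply v).aemeasurable).1
    hindep]
  exact congrArg₂ Measure.prod (heval u) (heval v)

namespace boundedMeasurable

variable {α β : Type*} [MeasurableSpace α] [MeasurableSpace β]

/-- The integral of a bounded measurable function, as a linear functional. -/
def mean (μ : Measure α) [IsFiniteMeasure μ] : boundedMeasurable α →ₗ[ℝ] ℝ where
  toFun f := ∫ a, f a ∂μ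
  map_add' f g := integral_add (integrable f μ) (integrable g μ)
  map_smul' c _ := integral_const_mul c _

lemma mean_comap {μ : Measure α} {ν : Measure β} [IsFiniteMeasure μ] [IsFiniteMeasure ν]
    {g : α → β} (hg : MeasurePreserving g μ ν) (f : boundedMeasurable β) :
    mean μ (comap g hg.measurable f) = mean ν f := by
  have hmap := integral_map hg.measurable.aemeasurable (measurable f).aestronglyMeasurable (μ := μ)
  rw [hg.map_eq] at hmap
  exact hmap.symm

lemma sq_mean_le (μ : Measure α) [IsProbabilityMeasure μ] (f : boundedMeasurable α) :
    mean μ f ^ 2 ≤ mean μ (f ^ 2) := by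
  have hvar := ProbabilityTheory.variance_nonneg f μ
  rw [ProbabilityTheory.variance_eq_sub (memLp f 2 μ)] at hvar
  exact sub_nonneg.1 hvar

lemma mean_sq_eq_zero_iff (μ : Measure α) [IsFiniteMeasure μ] (f : boundedMeasurable α) :
    mean μ (f ^ 2) = 0 ↔ f =ᵐ[μ] 0 := by
  refine (integral_eq_zero_iff_of_nonneg (fun a => sq_nonneg (f a)) (integrable (f ^ 2) μ)).trans ?_
  exact eventually_congr (Eventually.of_forall fun a => pow_eq_zero_iff two_ne_zero)

end boundedMeasurable

section Density

open boundedMeasurable (mean)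

variable {α : Type*} [MeasurableSpace α] {n : ℕ}

/-- The factor `K (x u, x v)` which an edge `(u, v)` decorated by the kernel `K` contributes to a
homomorphism density. -/
def edgeValue (e : Fin n × Fin n) :
    boundedMeasurable (α × α) →ₐ[ℝ] boundedMeasurable (Fin n → α) :=
  boundedMeasurable.comap (fun x => (x e.1, x e.2)) (by fun_prop)

/-- The product of the factors of all edges in a multiset of ordered pairs of vertices. -/
def edgeProduct (W : boundedMeasurable (α × α)) (E : Multiset (Fin n × Fin n)) :
    boundedMeasurable (Fin n → α) :=
  (E.map fun e => edgeValue e W).prod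

lemma edgeProduct_cons (W : boundedMeasurable (α × α)) (e : Fin n × Fin n)
    (E : Multiset (Fin n × Fin n)) :
    edgeProduct W (e ::ₘ E) = edgeValue e W * edgeProduct W E := by
  rw [edgeProduct, Multiset.map_cons, Multiset.prod_cons, edgeProduct]

lemma edgeProduct_apply (W : boundedMeasurable (α × α)) (E : Multiset (Fin n × Fin n))
    (x : Fin n → α) : edgeProduct W E x = (E.map fun e => W (x e.1, x e.2)).prod := by
  induction E using Multiset.induction with
  | empty => rfl
  | cons e E ih =>
    rw [edgeProduct_cons, Multiset.map_cons, Multiset.prod_cons, ← ih]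
    rfl

lemma edgeProduct_map_succ_cons (W : boundedMeasurable (α × α)) (E : Multiset (Fin n × Fin n))
    (z : α) (x : Fin n → α) :
    edgeProduct W (E.map (Prod.map Fin.succ Fin.succ)) (Fin.cons z x : Fin (n + 1) → α) =
      edgeProduct W E x := by
  rw [edgeProduct_apply, edgeProduct_apply, Multiset.map_map]
  rfl

variable (μ : Measure α) [IsProbabilityMeasure μ]

/-- The homomorphism density in `W` of the multigraph on `Fin n` whose edges are listed, with
multiplicities and in arbitrary orientations, by `E`. -/
def multigraphDensity (W : boundedMeasurable (α × α)) (E : Multiset (Fin n × Fin n)) : ℝ :=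
  mean (Measure.pi fun _ => μ) (edgeProduct W E)

/-- The density of the multigraph `e ::ₘ E` as a linear functional of the kernel decorating `e`,
all other edges being decorated by `W`. -/
def edgeFunctional (W : boundedMeasurable (α × α)) (e : Fin n × Fin n)
    (E : Multiset (Fin n × Fin n)) : boundedMeasurable (α × α) →ₗ[ℝ] ℝ :=
  mean (Measure.pi fun _ => μ) ∘ₗ LinearMap.mulRight ℝ (edgeProduct W E) ∘ₗ
    (edgeValue e).toLinearMap

lemma edgeFunctional_apply (W K : boundedMeasurable (α × α)) (e : Fin n × Fin n)
    (E : Multiset (Fin n × Fin n)) :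
    edgeFunctional μ W e E K = mean (Measure.pi fun _ => μ) (edgeValue e K * edgeProduct W E) :=
  rfl

lemma edgeFunctional_self (W : boundedMeasurable (α × α)) (e : Fin n × Fin n)
    (E : Multiset (Fin n × Fin n)) :
    edgeFunctional μ W e E W = multigraphDensity μ W (e ::ₘ E) := by
  rw [edgeFunctional_apply, multigraphDensity, edgeProduct_cons]

lemma edgeFunctional_compRight (W K : boundedMeasurable (α × α)) (u v : Fin n)
    (E : Multiset (Fin n × Fin n)) :
    edgeFunctional μ W (u, v) E (compRight μ W K) =
      edgeFunctional μ W (u.succ, 0) ((0, v.succ) ::ₘ E.map (Prod.map Fin.succ Fin.succ)) K := by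
  set F := edgeValue (u.succ, 0) K *
    edgeProduct W ((0, v.succ) ::ₘ E.map (Prod.map Fin.succ Fin.succ)) with hF
  have hcons := measurePreserving_finCons μ n
  have hFcons (z : α) (x : Fin n → α) : F (Fin.cons z x : Fin (n + 1) → α) =
      K (x u, z) * W (z, x v) * edgeProduct W E x := by
    rw [mul_assoc, ← edgeProduct_map_succ_cons W E z x, hF, edgeProduct_cons]
    rfl
  symm
  calc mean (Measure.pi fun _ => μ) F
      = mean (μ.prod (Measure.pi fun _ => μ)) (boundedMeasurable.comap _ hcons.measurable F) :=
        (boundedMeasurable.mean_comap hcons F).symm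
    _ = ∫ x, ∫ z, F (Fin.cons z x : Fin (n + 1) → α) ∂μ ∂Measure.pi (fun _ => μ) :=
        integral_prod_symm _ (boundedMeasurable.integrable _ _)
    _ = ∫ x, compRight μ W K (x u, x v) * edgeProduct W E x ∂Measure.pi (fun _ => μ) := by
        simp only [hFcons, integral_mul_const, compRight_apply]

lemma tendsto_edgeFunctional_zero (W : boundedMeasurable (α × α)) {e : Fin n × Fin n}
    (he : e.1 ≠ e.2) (E : Multiset (Fin n × Fin n)) {K : ℕ → boundedMeasurable (α × α)}
    (hK : Tendsto (fun N => ∫ p, K N p ^ 2 ∂μ.prod μ) atTop (𝓝 0)) :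
    Tendsto (fun N => edgeFunctional μ W e E (K N)) atTop (𝓝 0) := by
  have hedge (N : ℕ) : mean (Measure.pi fun _ => μ) (edgeValue e (K N) ^ 2) =
      ∫ p, K N p ^ 2 ∂μ.prod μ :=
    boundedMeasurable.mean_comap (measurePreserving_eval_prodMk μ he) (K N ^ 2)
  have hle (N : ℕ) : edgeFunctional μ W e E (K N) ^ 2 ≤
      (∫ p, K N p ^ 2 ∂μ.prod μ) * boundedMeasurable.bound (edgeProduct W E) ^ 2 := by
    rw [edgeFunctional_apply, ← hedge]
    refine (boundedMeasurable.sq_mean_le _ _).trans ?_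
    refine (integral_mono (boundedMeasurable.integrable _ _)
      ((boundedMeasurable.integrable (edgeValue e (K N) ^ 2) _).mul_const _) fun x => ?_).trans_eq
        (integral_mul_const _ _)
    have hsq := sq_le_sq' (neg_le_of_abs_le (boundedMeasurable.abs_le_bound (edgeProduct W E) x))
      (le_of_abs_le (boundedMeasurable.abs_le_bound (edgeProduct W E) x))
    exact (mul_pow _ _ 2).trans_le (mul_le_mul_of_nonneg_left hsq (sq_nonneg _))
  have hsq := squeeze_zero (fun _ => sq_nonneg _) hle (by simpa using hK.mul_const _)
  refine (tendsto_zero_iff_abs_tendsto_zero _).2 ?_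
  simpa [Real.sqrt_sq_eq_abs, Function.comp_def] using hsq.sqrt

/-- The multiset lists every edge of some simple graph exactly once, in one of its two
orientations. -/
def IsSimpleEdgeList (E : Multiset (Fin n × Fin n)) : Prop :=
  (E.map fun e => s(e.1, e.2)).Nodup ∧ ∀ e ∈ E, e.1 ≠ e.2

namespace IsSimpleEdgeList

lemma cons_iff {e : Fin n × Fin n} {E : Multiset (Fin n × Fin n)} :
    IsSimpleEdgeList (e ::ₘ E) ↔
      e.1 ≠ e.2 ∧ s(e.1, e.2) ∉ E.map (fun e => s(e.1, e.2)) ∧ IsSimpleEdgeList E := by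
  rw [IsSimpleEdgeList, Multiset.map_cons, Multiset.nodup_cons, Multiset.forall_mem_cons,
    IsSimpleEdgeList]
  tauto

lemma map_succ {E : Multiset (Fin n × Fin n)} (hE : IsSimpleEdgeList E) :
    IsSimpleEdgeList (E.map (Prod.map Fin.succ Fin.succ)) := by
  have hmap : (E.map (Prod.map Fin.succ Fin.succ)).map (fun e => s(e.1, e.2)) =
      (E.map fun e => s(e.1, e.2)).map (Sym2.map Fin.succ) := by
    simp only [Multiset.map_map]
    rfl
  refine ⟨hmap ▸ hE.1.map (Sym2.map.injective (Fin.succ_injective n)), ?_⟩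
  rw [Multiset.forall_mem_map_iff]
  exact fun e he => (Fin.succ_injective n).ne (hE.2 e he)

lemma pendant {E : Multiset (Fin n × Fin n)} (hE : IsSimpleEdgeList E) (v : Fin n) :
    IsSimpleEdgeList ((0, v.succ) ::ₘ E.map (Prod.map Fin.succ Fin.succ)) :=
  cons_iff.2 ⟨(Fin.succ_ne_zero v).symm, by simp [Fin.succ_ne_zero], hE.map_succ⟩

lemma subdivide {E : Multiset (Fin n × Fin n)} (hE : IsSimpleEdgeList E) {u v : Fin n}
    (huv : u ≠ v) :
    IsSimpleEdgeList ((u.succ, 0) ::ₘ (0, v.succ) ::ₘ E.map (Prod.map Fin.succ Fin.succ)) :=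
  cons_iff.2 ⟨Fin.succ_ne_zero u, by simp [Fin.succ_ne_zero, huv], hE.pendant v⟩

end IsSimpleEdgeList

/-- The edges of a simple graph, each oriented from its smaller to its larger endpoint. -/
def edgePairs (F : SimpleGraph (Fin n)) : Finset (Fin n × Fin n) :=
  Finset.univ.filter fun p => p.1 < p.2 ∧ F.Adj p.1 p.2

lemma map_edgePairs (F : SimpleGraph (Fin n)) :
    (edgePairs F).val.map (fun e => s(e.1, e.2)) = F.edgeFinset.val := by
  have hmem (p : Fin n × Fin n) : p ∈ (edgePairs F).val ↔ p.1 < p.2 ∧ F.Adj p.1 p.2 := by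
    simp [edgePairs]
  have hinj : ∀ p ∈ (edgePairs F).val, ∀ q ∈ (edgePairs F).val,
      s(p.1, p.2) = s(q.1, q.2) → p = q := by
    rintro ⟨a, b⟩ hp ⟨c, d⟩ hq h
    obtain h | h := Sym2.eq_iff.1 h
    · exact Prod.ext h.1 h.2
    · exact absurd (h.1 ▸ h.2 ▸ ((hmem _).1 hp).1) ((hmem _).1 hq).1.asymm
  refine (((edgePairs F).nodup.map_on hinj).ext F.edgeFinset.nodup).2 fun e => ?_
  induction e with | _ u v
  rw [Finset.mem_val, SimpleGraph.mem_edgeFinset, SimpleGraph.mem_edgeSet, Multiset.mem_map]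
  refine ⟨?_, fun h => ?_⟩
  · rintro ⟨p, hp, h⟩
    exact (SimpleGraph.adj_congr_of_sym2 F h).1 ((hmem p).1 hp).2
  · obtain huv | hvu := h.ne.lt_or_gt
    · exact ⟨(u, v), (hmem _).2 ⟨huv, h⟩, rfl⟩
    · exact ⟨(v, u), (hmem _).2 ⟨hvu, h.symm⟩, Sym2.eq_swap⟩

lemma IsSimpleEdgeList.exists_edgePairs {E : Multiset (Fin n × Fin n)} (hE : IsSimpleEdgeList E) :
    ∃ F : SimpleGraph (Fin n),
      E.map (fun e => s(e.1, e.2)) = (edgePairs F).val.map fun e => s(e.1, e.2) := by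
  obtain ⟨F, hF⟩ : ∃ F : SimpleGraph (Fin n),
      F.edgeSet = {e | e ∈ E.map fun e => s(e.1, e.2)} \ {e | e.IsDiag} :=
    ⟨_, SimpleGraph.edgeSet_fromEdgeSet _⟩
  refine ⟨F, ?_⟩
  rw [map_edgePairs]
  refine (hE.1.ext (Finset.nodup _)).2 fun e => ?_
  have hdiag : e ∈ E.map (fun e => s(e.1, e.2)) → ¬ e.IsDiag := by
    rw [Multiset.mem_map]
    rintro ⟨p, hp, rfl⟩
    exact Sym2.mk_isDiag_iff.not.2 (hE.2 p hp)
  rw [Finset.mem_val, SimpleGraph.mem_edgeFinset, hF]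
  exact ⟨fun h => ⟨h, hdiag h⟩, And.left⟩

/-- Weak isomorphism of kernels on possibly different probability spaces: every finite simple graph
has the same homomorphism density in both. -/
def WeaklyIsomorphicKernels {β : Type*} [MeasurableSpace β] (ν : Measure β) [IsProbabilityMeasure ν]
    (W : boundedMeasurable (α × α)) (U : boundedMeasurable (β × β)) : Prop :=
  ∀ (n : ℕ) (F : SimpleGraph (Fin n)),
    multigraphDensity μ W (edgePairs F).val = multigraphDensity ν U (edgePairs F).val

lemma multigraphDensity_congr {W : boundedMeasurable (α × α)} (hW : ∀ x y, W (x, y) = W (y, x))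
    {E E' : Multiset (Fin n × Fin n)}
    (h : E.map (fun e => s(e.1, e.2)) = E'.map fun e => s(e.1, e.2)) :
    multigraphDensity μ W E = multigraphDensity μ W E' := by
  let w : Sym2 (Fin n) → boundedMeasurable (Fin n → α) := Sym2.lift
    ⟨fun u v => edgeValue (u, v) W, fun u v => Subtype.ext (funext fun x => hW (x u) (x v))⟩
  have hw (E : Multiset (Fin n × Fin n)) :
      edgeProduct W E = ((E.map fun e => s(e.1, e.2)).map w).prod := by
    rw [Multiset.map_map]
    rfl
  rw [multigraphDensity, multigraphDensity, hw, hw, h]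

end Density

section Transfer

variable {α β : Type*} [MeasurableSpace α] [MeasurableSpace β] {n : ℕ}

lemma multigraphDensity_comap {μ : Measure α} {ν : Measure β} [IsProbabilityMeasure μ]
    [IsProbabilityMeasure ν] {g : α → β} (hg : MeasurePreserving g μ ν)
    (K : boundedMeasurable (β × β)) (E : Multiset (Fin n × Fin n)) :
    multigraphDensity μ (boundedMeasurable.comap (Prod.map g g)
      (hg.measurable.prodMap hg.measurable) K) E = multigraphDensity ν K E := by
  have hpi : MeasurePreserving (fun (x : Fin n → α) i => g (x i)) (Measure.pi fun _ => μ)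
      (Measure.pi fun _ => ν) := measurePreserving_pi _ _ fun _ => hg
  rw [multigraphDensity, multigraphDensity, ← boundedMeasurable.mean_comap hpi]
  refine congrArg _ (Eq.symm ?_)
  rw [edgeProduct, map_multiset_prod, Multiset.map_map]
  rfl

lemma multigraphDensity_congr_ae {μ : Measure α} [IsProbabilityMeasure μ]
    {K L : boundedMeasurable (α × α)} (h : K =ᵐ[μ.prod μ] L) {E : Multiset (Fin n × Fin n)}
    (hE : ∀ e ∈ E, e.1 ≠ e.2) : multigraphDensity μ K E = multigraphDensity μ L E := by
  refine integral_congr_ae ?_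
  induction E using Multiset.induction with
  | empty => rfl
  | cons e E ih =>
    rw [Multiset.forall_mem_cons] at hE
    have hedge : edgeValue e K =ᵐ[Measure.pi fun _ => μ] edgeValue e L :=
      (measurePreserving_eval_prodMk μ hE.1).quasiMeasurePreserving.ae h
    rw [edgeProduct_cons, edgeProduct_cons]
    exact hedge.mul (ih hE.2)

end Transfer

/-! ### Simple densities determine multigraph densities -/

lemma apply_aeval_sub_apply_aeval {R V V' : Type*} [CommRing R] [AddCommGroup V] [AddCommGroup V']
    [Module R V] [Module R V'] {l : V →ₗ[R] R} {l' : V' →ₗ[R] R} {A : Module.End R V}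
    {A' : Module.End R V'} {v : V} {v' : V'}
    (h : ∀ k, l ((A ^ (k + 1)) v) = l' ((A' ^ (k + 1)) v')) {p : R[X]} (hp : p.coeff 0 = 1) :
    l (aeval A p v) - l' (aeval A' p v') = l v - l' v' := by
  simp only [aeval_eq_sum_range, Finset.sum_range_succ' _ p.natDegree, LinearMap.add_apply,
    LinearMap.sum_apply, LinearMap.smul_apply, map_add, map_sum, map_smul, h, hp, pow_zero,
    Module.End.one_apply, one_smul, add_sub_add_left_eq_sub]

section Forcing

variable {α β : Type*} [MeasurableSpace α] [MeasurableSpace β] {μ : Measure α} {ν : Measure β}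
  [IsProbabilityMeasure μ] [IsProbabilityMeasure ν]
  {W : boundedMeasurable (α × α)} {U : boundedMeasurable (β × β)}

lemma edgeFunctional_compRight_pow_eq {m : ℕ}
    (h : ∀ (n : ℕ) (D E : Multiset (Fin n × Fin n)), D.card = m → (∀ e ∈ D, e.1 ≠ e.2) →
      IsSimpleEdgeList E → multigraphDensity μ W (D + E) = multigraphDensity ν U (D + E))
    (k : ℕ) {n : ℕ} {u v : Fin n} (huv : u ≠ v) {D E : Multiset (Fin n × Fin n)}
    (hDcard : D.card = m) (hD : ∀ e ∈ D, e.1 ≠ e.2) (hE : IsSimpleEdgeList E) :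
    edgeFunctional μ W (u, v) (D + E) ((compRight μ W ^ (k + 1)) W) =
      edgeFunctional ν U (u, v) (D + E) ((compRight ν U ^ (k + 1)) U) := by
  have hmap {n : ℕ} {D : Multiset (Fin n × Fin n)} (hD : ∀ e ∈ D, e.1 ≠ e.2) :
      ∀ e ∈ D.map (Prod.map Fin.succ Fin.succ), e.1 ≠ e.2 :=
    Multiset.forall_mem_map_iff.2 fun e he => (Fin.succ_injective n).ne (hD e he)
  induction k generalizing n u v D E with
  | zero =>
    simp only [zero_add, pow_one, edgeFunctional_compRight, edgeFunctional_self, Multiset.map_add,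
      ← Multiset.add_cons]
    exact h _ _ _ ((Multiset.card_map _ D).trans hDcard) (hmap hD) (hE.subdivide huv)
  | succ k ih =>
    simp only [pow_succ' _ (k + 1), Module.End.mul_apply, edgeFunctional_compRight,
      Multiset.map_add, ← Multiset.add_cons]
    exact ih (Fin.succ_ne_zero u) ((Multiset.card_map _ D).trans hDcard) (hmap hD) (hE.pendant v)

lemma multigraphDensity_cons_eq [IsSeparable μ] [IsSeparable ν]
    (hW : ∀ x y, W (x, y) = W (y, x)) (hU : ∀ x y, U (x, y) = U (y, x)) {n : ℕ} {e : Fin n × Fin n}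
    (he : e.1 ≠ e.2) {E : Multiset (Fin n × Fin n)}
    (h : ∀ k, edgeFunctional μ W e E ((compRight μ W ^ (k + 1)) W) =
      edgeFunctional ν U e E ((compRight ν U ^ (k + 1)) U)) :
    multigraphDensity μ W (e ::ₘ E) = multigraphDensity ν U (e ::ₘ E) := by
  set M := ‖integralOperator μ W‖ + ‖integralOperator ν U‖ + 1
  have hM₀ : 0 < M := by positivity
  have hlimW := tendsto_edgeFunctional_zero μ W he E
    (tendsto_integral_sq_aeval_ergodicPolynomial hW
      (by linarith [norm_nonneg (integralOperator ν U)]) hM₀)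
  have hlimU := tendsto_edgeFunctional_zero ν U he E
    (tendsto_integral_sq_aeval_ergodicPolynomial hU
      (by linarith [norm_nonneg (integralOperator μ W)]) hM₀)
  have hlim := hlimW.sub hlimU
  simp only [apply_aeval_sub_apply_aeval h (coeff_zero_ergodicPolynomial M _),
    edgeFunctional_self, sub_zero] at hlim
  exact sub_eq_zero.1 (tendsto_nhds_unique tendsto_const_nhds hlim)

variable [IsSeparable μ] [IsSeparable ν]
  (hW : ∀ x y, W (x, y) = W (y, x)) (hU : ∀ x y, U (x, y) = U (y, x))
  (hWU : WeaklyIsomorphicKernels μ ν W U)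
include hW hU hWU

theorem multigraphDensity_eq_of_forall_simpleGraph {n : ℕ} {E : Multiset (Fin n × Fin n)}
    (hE : ∀ e ∈ E, e.1 ≠ e.2) : multigraphDensity μ W E = multigraphDensity ν U E := by
  suffices h : ∀ (m n : ℕ) (D E : Multiset (Fin n × Fin n)), D.card = m → (∀ e ∈ D, e.1 ≠ e.2) →
      IsSimpleEdgeList E → multigraphDensity μ W (D + E) = multigraphDensity ν U (D + E) by
    have hempty : IsSimpleEdgeList (0 : Multiset (Fin n × Fin n)) := by simp [IsSimpleEdgeList]
    simpa only [add_zero] using h _ n E 0 rfl hE hempty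
  intro m
  induction m with
  | zero =>
    intro n D E hD _ hE
    obtain ⟨F, hF⟩ := hE.exists_edgePairs
    rw [Multiset.card_eq_zero.1 hD, zero_add, multigraphDensity_congr μ hW hF,
      multigraphDensity_congr ν hU hF, hWU n F]
  | succ m ih =>
    intro n D E hDcard hD hE
    obtain ⟨e, D, rfl, hDm⟩ := Multiset.card_eq_succ_iff.1 hDcard
    rw [Multiset.forall_mem_cons] at hD
    rw [Multiset.cons_add]
    exact multigraphDensity_cons_eq hW hU hD.1 fun k =>
      edgeFunctional_compRight_pow_eq ih k hD.1 hDm hD.2 hE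

lemma mean_aeval_edgeValue_mul_edgeProduct_eq {n : ℕ}
    (p : MvPolynomial {e : Fin n × Fin n // e.1 ≠ e.2} ℝ) {D : Multiset (Fin n × Fin n)}
    (hD : ∀ e ∈ D, e.1 ≠ e.2) :
    boundedMeasurable.mean (Measure.pi fun _ => μ)
        (MvPolynomial.aeval (fun e => edgeValue e.1 W) p * edgeProduct W D) =
      boundedMeasurable.mean (Measure.pi fun _ => ν)
        (MvPolynomial.aeval (fun e => edgeValue e.1 U) p * edgeProduct U D) := by
  induction p using MvPolynomial.induction_on generalizing D with
  | C a =>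
    simp only [MvPolynomial.aeval_C, Algebra.algebraMap_eq_smul_one, smul_mul_assoc, one_mul,
      map_smul]
    exact congrArg (a • ·) (multigraphDensity_eq_of_forall_simpleGraph hW hU hWU hD)
  | add p q hp hq => simp only [map_add, add_mul, hp hD, hq hD]
  | mul_X p e hp =>
    simp only [map_mul, MvPolynomial.aeval_X, mul_assoc, ← edgeProduct_cons]
    exact hp (Multiset.forall_mem_cons.2 ⟨e.2, hD⟩)

theorem aeval_edgeValue_ae_eq_zero_iff {n : ℕ}
    (p : MvPolynomial {e : Fin n × Fin n // e.1 ≠ e.2} ℝ) :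
    (MvPolynomial.aeval (fun e => edgeValue e.1 W) p : boundedMeasurable (Fin n → α))
        =ᵐ[Measure.pi fun _ => μ] 0 ↔
      (MvPolynomial.aeval (fun e => edgeValue e.1 U) p : boundedMeasurable (Fin n → β))
        =ᵐ[Measure.pi fun _ => ν] 0 := by
  have hsq := mean_aeval_edgeValue_mul_edgeProduct_eq hW hU hWU (p ^ 2)
    (D := 0) (by simp)
  rw [← boundedMeasurable.mean_sq_eq_zero_iff, ← boundedMeasurable.mean_sq_eq_zero_iff,
    ← map_pow, ← map_pow]
  simp only [edgeProduct, Multiset.map_zero, Multiset.prod_zero, mul_one] at hsq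
  rw [hsq]

end Forcing

/-! ### Kernels without alternating four-cycles -/

section AlternatingFourCycle

variable {α β : Type*} [MeasurableSpace α] [MeasurableSpace β]

/-- The product `K (x₀, x₁) (1 - K (x₁, x₂)) K (x₂, x₃) (1 - K (x₃, x₀))`, which for a `0`-`1`
valued kernel indicates the four-cycles that alternate between edges and non-edges. -/
def alternatingFourCycle (K : boundedMeasurable (α × α)) : boundedMeasurable (Fin 4 → α) :=
  edgeValue (0, 1) K * (1 - edgeValue (1, 2) K) * edgeValue (2, 3) K * (1 - edgeValue (3, 0) K)

lemma alternatingFourCycle_apply (K : boundedMeasurable (α × α)) (x : Fin 4 → α) :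
    alternatingFourCycle K x =
      K (x 0, x 1) * (1 - K (x 1, x 2)) * K (x 2, x 3) * (1 - K (x 3, x 0)) := rfl

/-- The polynomial in the edge factors whose value is `alternatingFourCycle`. -/
def alternatingFourCyclePolynomial : MvPolynomial {e : Fin 4 × Fin 4 // e.1 ≠ e.2} ℝ :=
  .X ⟨(0, 1), by decide⟩ * (1 - .X ⟨(1, 2), by decide⟩) * .X ⟨(2, 3), by decide⟩ *
    (1 - .X ⟨(3, 0), by decide⟩)

lemma aeval_alternatingFourCyclePolynomial (K : boundedMeasurable (α × α)) :
    MvPolynomial.aeval (fun e => edgeValue e.1 K) alternatingFourCyclePolynomial =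
      alternatingFourCycle K := by
  simp only [alternatingFourCyclePolynomial, map_mul, map_sub, map_one, MvPolynomial.aeval_X]
  rfl

lemma alternatingFourCycle_ae_eq_zero_iff {μ : Measure α} {ν : Measure β} [IsProbabilityMeasure μ]
    [IsProbabilityMeasure ν] [IsSeparable μ] [IsSeparable ν]
    {W : boundedMeasurable (α × α)} {U : boundedMeasurable (β × β)}
    (hW : ∀ x y, W (x, y) = W (y, x)) (hU : ∀ x y, U (x, y) = U (y, x))
    (hWU : WeaklyIsomorphicKernels μ ν W U) :
    alternatingFourCycle W =ᵐ[Measure.pi fun _ => μ] 0 ↔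
      alternatingFourCycle U =ᵐ[Measure.pi fun _ => ν] 0 := by
  rw [← aeval_alternatingFourCyclePolynomial W, ← aeval_alternatingFourCyclePolynomial U]
  exact aeval_edgeValue_ae_eq_zero_iff hW hU hWU _

/-- A symmetric, `0`-`1` valued kernel which is decreasing in both variables. -/
structure IsDecreasingZeroOne [Preorder α] (U : boundedMeasurable (α × α)) : Prop where
  symm (x y : α) : U (x, y) = U (y, x)
  eq_zero_or_one (p : α × α) : U p = 0 ∨ U p = 1
  antitone : Antitone U

lemma IsDecreasingZeroOne.alternatingFourCycle_eq_zero [LinearOrder α]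
    {U : boundedMeasurable (α × α)} (hU : IsDecreasingZeroOne U) : alternatingFourCycle U = 0 := by
  have hzero {a c d : α} (hac : a ≤ c) : U (c, d) * (1 - U (d, a)) = 0 := by
    obtain h | h := hU.eq_zero_or_one (c, d)
    · rw [h, zero_mul]
    · have hle := h ▸ hU.antitone (Prod.mk_le_mk.2 ⟨hac, le_refl d⟩)
      obtain h' | h' := hU.eq_zero_or_one (a, d)
      · exact absurd (h' ▸ hle) zero_lt_one.not_ge
      · rw [hU.symm d, h', sub_self, mul_zero]
  refine Subtype.ext (funext fun x => ?_)
  rw [alternatingFourCycle_apply]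
  obtain h | h := le_total (x 0) (x 2)
  · rw [mul_assoc _ (U _), hzero h, mul_zero]
    rfl
  · rw [hzero h, zero_mul, zero_mul]
    rfl

end AlternatingFourCycle

/-! ### Structure of kernels without alternating four-cycles -/

lemma ae_or_ae_of_ae_prod {α β : Type*} [MeasurableSpace α] [MeasurableSpace β] {μ : Measure α}
    {ν : Measure β} [SFinite ν] {p : α → Prop} {q : β → Prop}
    (h : ∀ᵐ z ∂μ.prod ν, p z.1 ∨ q z.2) : (∀ᵐ a ∂μ, p a) ∨ ∀ᵐ b ∂ν, q b := by
  have hprod : μ.prod ν ({a | ¬ p a} ×ˢ {b | ¬ q b}) = 0 :=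
    measure_mono_null (fun z hz => not_or.2 hz) (ae_iff.1 h)
  rwa [Measure.prod_prod, mul_eq_zero] at hprod

lemma ae_mem_of_ae_mem_or_mem {α β : Type*} [MeasurableSpace α] [MeasurableSpace β] {μ : Measure α}
    {ν : Measure β} [SFinite μ] [SFinite ν] {S : Set (α × β)} (hS : MeasurableSet S)
    (h : ∀ᵐ p ∂ν.prod ν, ∀ᵐ z ∂μ, (z, p.1) ∈ S ∨ (z, p.2) ∈ S) : ∀ᵐ q ∂μ.prod ν, q ∈ S := by
  have hmeas : MeasurableSet {q : (β × β) × α | (q.2, q.1.1) ∈ S ∨ (q.2, q.1.2) ∈ S} :=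
    (hS.preimage (by fun_prop : Measurable fun q : (β × β) × α => (q.2, q.1.1))).union
      (hS.preimage (by fun_prop : Measurable fun q : (β × β) × α => (q.2, q.1.2)))
  refine (Measure.ae_prod_iff_ae_ae (p := (· ∈ S)) hS).2
    (((Measure.ae_ae_comm hmeas).1 h).mono fun z hz => ?_)
  simpa only [or_self] using
    ae_or_ae_of_ae_prod (p := fun x => (z, x) ∈ S) (q := fun x => (z, x) ∈ S) hz

lemma measurePreserving_vec_four {α : Type*} [MeasurableSpace α] (μ : Measure α) [SigmaFinite μ] :
    MeasurePreserving (fun z : (α × α) × (α × α) => ![z.1.1, z.2.1, z.1.2, z.2.2])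
      ((μ.prod μ).prod (μ.prod μ)) (Measure.pi fun _ => μ) := by
  have hmeas : Measurable (fun z : (α × α) × (α × α) => ![z.1.1, z.2.1, z.1.2, z.2.2]) := by
    rw [measurable_pi_iff, Fin.forall_fin_succ, Fin.forall_fin_succ, Fin.forall_fin_two]
    exact ⟨measurable_fst.fst, measurable_snd.fst, measurable_fst.snd, measurable_snd.snd⟩
  refine ⟨hmeas, (Measure.pi_eq fun s hs => ?_).symm⟩
  have hpre : (fun z : (α × α) × (α × α) => ![z.1.1, z.2.1, z.1.2, z.2.2]) ⁻¹' univ.pi s =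
      (s 0 ×ˢ s 2) ×ˢ (s 1 ×ˢ s 3) := by
    ext z
    simp [Fin.forall_fin_succ]
    tauto
  rw [Measure.map_apply hmeas (MeasurableSet.univ_pi hs), hpre, Measure.prod_prod,
    Measure.prod_prod, Measure.prod_prod, Fin.prod_univ_four]
  ring

lemma measure_setOf_measure_Iic_eq_and_measure_Iio_eq {X : Type*} [LinearOrder X]
    [TopologicalSpace X] [OrderTopology X] [SecondCountableTopology X] [MeasurableSpace X]
    [BorelSpace X] (μ : Measure X) [IsFiniteMeasure μ] [μ.InnerRegularCompactLTTop] (b : ENNReal) :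
    μ {a | μ (Iic a) = b ∧ μ (Iio a) = b} = 0 := by
  have hIic : Monotone fun a => μ (Iic a) := fun _ _ h => measure_mono (Iic_subset_Iic.2 h)
  have hIio : Monotone fun a => μ (Iio a) := fun _ _ h => measure_mono (Iio_subset_Iio h)
  have hmeas : MeasurableSet {a | μ (Iic a) = b ∧ μ (Iio a) = b} :=
    (hIic.measurable (measurableSet_singleton b)).inter
      (hIio.measurable (measurableSet_singleton b))
  rw [hmeas.measure_eq_iSup_isCompact_of_ne_top (measure_ne_top μ _)]
  simp only [ENNReal.iSup_eq_zero]
  intro S hS hcompact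
  obtain rfl | hne := S.eq_empty_or_nonempty
  · exact measure_empty
  obtain ⟨m, hmS, hm⟩ := hcompact.exists_isLeast hne
  obtain ⟨M, hMS, hM⟩ := hcompact.exists_isGreatest hne
  have hsub : S ⊆ Iic M \ Iio m := fun x hx => ⟨hM hx, not_lt.2 (hm hx)⟩
  refine measure_mono_null hsub ?_
  have hle : Iio m ⊆ Iic M := fun x hx => hx.le.trans (hm hMS)
  rw [measure_sdiff hle measurableSet_Iio.nullMeasurableSet (measure_ne_top _ _), (hS hMS).1,
    (hS hmS).2, tsub_self]

lemma ae_mem_iff_measure_Iic_le {α X : Type*} [MeasurableSpace α] {μ : Measure α}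
    [IsFiniteMeasure μ] [LinearOrder X] [TopologicalSpace X] [OrderTopology X]
    [SecondCountableTopology X] [MeasurableSpace X] [BorelSpace X] {f : α → X} (hf : Measurable f)
    [(μ.map f).InnerRegularCompactLTTop] {S : Set α}
    (h : ∀ᵐ p ∂μ.prod μ, f p.1 ≤ f p.2 → p.2 ∈ S → p.1 ∈ S) :
    ∀ᵐ x ∂μ, x ∈ S ↔ μ.map f (Iic (f x)) ≤ μ S := by
  have htie : ∀ᵐ x ∂μ, ¬ (μ.map f (Iic (f x)) = μ S ∧ μ.map f (Iio (f x)) = μ S) :=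
    ae_of_ae_map hf.aemeasurable
      (compl_mem_ae_iff.2 (measure_setOf_measure_Iic_eq_and_measure_Iio_eq (μ.map f) (μ S)))
  filter_upwards [htie, Measure.ae_ae_of_ae_prod h, Measure.ae_ae_of_ae_prod
    (Measure.measurePreserving_swap.quasiMeasurePreserving.ae h)] with x htie hgt hlt
  refine ⟨fun hx => ?_, fun hle => by_contra fun hx => htie ?_⟩
  · rw [Measure.map_apply hf measurableSet_Iic]
    exact measure_mono_ae (hlt.mono fun y hy hyx => hy hyx hx)
  · have hIio : μ S ≤ μ.map f (Iio (f x)) := by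
      rw [Measure.map_apply hf measurableSet_Iio]
      exact measure_mono_ae (hgt.mono fun y hy hyS => not_le.1 fun hxy => hx (hy hxy hyS))
    have hmono := measure_mono (μ := μ.map f) (Iio_subset_Iic_self (a := f x))
    exact ⟨hle.antisymm (hIio.trans hmono), (hmono.trans hle).antisymm hIio⟩

/-- The distribution function of a probability measure on the unit interval. -/
def unitCDF (ρ : Measure I) [IsProbabilityMeasure ρ] : I →o I where
  toFun t := ⟨ρ.real (Iic t), measureReal_nonneg, measureReal_le_one⟩
  monotone' _ _ h := Subtype.mk_le_mk.2 (measureReal_mono (Iic_subset_Iic.2 h))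

/-- The kernel which is `1` exactly where `F s ≤ 1 - t` and `F t ≤ 1 - s`. -/
def thresholdKernel (F : I →o I) : boundedMeasurable (I × I) :=
  ⟨{p | F p.1 ≤ σ p.2 ∧ F p.2 ≤ σ p.1}.indicator 1, by
    have hle : MeasurableSet {p : I × I | F p.1 ≤ σ p.2} :=
      measurableSet_le (F.monotone.measurable.comp measurable_fst)
        (unitInterval.continuous_symm.measurable.comp measurable_snd)
    exact measurable_one.indicator (hle.inter (hle.preimage measurable_swap)),
    1, fun p => by
      obtain h | h := indicator_eq_zero_or_self {p : I × I | F p.1 ≤ σ p.2 ∧ F p.2 ≤ σ p.1}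
        (1 : I × I → ℝ) p <;> simp [h]⟩

lemma thresholdKernel_eq_zero_or_one (F : I →o I) (p : I × I) :
    thresholdKernel F p = 0 ∨ thresholdKernel F p = 1 := indicator_eq_zero_or_self _ _ _

lemma thresholdKernel_eq_one_iff {F : I →o I} {p : I × I} :
    thresholdKernel F p = 1 ↔ F p.1 ≤ σ p.2 ∧ F p.2 ≤ σ p.1 :=
  indicator_eq_one_iff_mem ℝ

lemma isDecreasingZeroOne_thresholdKernel (F : I →o I) :
    IsDecreasingZeroOne (thresholdKernel F) where
  symm x y := by
    obtain h | h := thresholdKernel_eq_zero_or_one F (x, y) <;>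
    obtain h' | h' := thresholdKernel_eq_zero_or_one F (y, x) <;>
    grind [thresholdKernel_eq_one_iff]
  eq_zero_or_one := thresholdKernel_eq_zero_or_one F
  antitone p q hpq := by
    obtain h | h := thresholdKernel_eq_zero_or_one F q
    · obtain h' | h' := thresholdKernel_eq_zero_or_one F p <;> simp [h, h']
    · have hq := thresholdKernel_eq_one_iff.1 h
      refine (h.trans (thresholdKernel_eq_one_iff.2 ⟨?_, ?_⟩).symm).le
      · exact (F.monotone hpq.1).trans (hq.1.trans (unitInterval.symm_le_symm.2 hpq.2))
      · exact (F.monotone hpq.2).trans (hq.2.trans (unitInterval.symm_le_symm.2 hpq.1))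

lemma IsDecreasingZeroOne.comap_prodMap {α β : Type*} [MeasurableSpace α] [MeasurableSpace β]
    [Preorder α] [Preorder β] {U : boundedMeasurable (β × β)} (hU : IsDecreasingZeroOne U)
    {g : α → β} (hg : Monotone g) (hg' : Measurable g) :
    IsDecreasingZeroOne (boundedMeasurable.comap (Prod.map g g) (hg'.prodMap hg') U) where
  symm x y := hU.symm (g x) (g y)
  eq_zero_or_one p := hU.eq_zero_or_one (Prod.map g g p)
  antitone := hU.antitone.comp_monotone (hg.prodMap hg)

section Nested

variable {α : Type*} [MeasurableSpace α] {μ : Measure α} [IsProbabilityMeasure μ]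
  {K : boundedMeasurable (α × α)}

/-- The measure of the set of all `y` with `K (x, y) ≠ 1`, by which the points are ordered. -/
def codegree (μ : Measure α) [IsProbabilityMeasure μ] (K : boundedMeasurable (α × α)) (x : α) : I :=
  ⟨μ.real {y | K (x, y) ≠ 1}, measureReal_nonneg, measureReal_le_one⟩

lemma measurable_codegree : Measurable (codegree μ K) :=
  (measurable_measure_prodMk_left (boundedMeasurable.measurable K
    (measurableSet_singleton 1).compl)).ennreal_toReal.subtype_mk

instance : IsProbabilityMeasure (μ.map (codegree μ K)) :=
  Measure.isProbabilityMeasure_map measurable_codegree.aemeasurable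

lemma measurableSet_section_ne_one (x : α) : MeasurableSet {y | K (x, y) ≠ 1} :=
  boundedMeasurable.measurable (boundedMeasurable.sectionAt x K) (measurableSet_singleton 1).compl

lemma ae_mul_one_sub_eq_zero_or (h : alternatingFourCycle K =ᵐ[Measure.pi fun _ => μ] 0) :
    ∀ᵐ p ∂μ.prod μ, (∀ᵐ z ∂μ, K (p.1, z) * (1 - K (z, p.2)) = 0) ∨
      ∀ᵐ z ∂μ, K (p.2, z) * (1 - K (z, p.1)) = 0 := by
  have hpairs := Measure.ae_ae_of_ae_prod
    ((measurePreserving_vec_four μ).quasiMeasurePreserving.ae h)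
  filter_upwards [hpairs] with p hp
  refine ae_or_ae_of_ae_prod (hp.mono fun z hz => mul_eq_zero.1 ?_)
  exact (mul_assoc _ _ _).symm.trans hz

variable (hK : ∀ x y, K (x, y) = K (y, x)) (h : alternatingFourCycle K =ᵐ[Measure.pi fun _ => μ] 0)
include hK h

lemma ae_eq_zero_or_one : ∀ᵐ p ∂μ.prod μ, K p = 0 ∨ K p = 1 := by
  refine ae_mem_of_ae_mem_or_mem (S := {p | K p = 0 ∨ K p = 1}) (boundedMeasurable.measurable K
    ((measurableSet_singleton 0).union (measurableSet_singleton 1))) ?_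
  filter_upwards [ae_mul_one_sub_eq_zero_or h] with p hp
  obtain hp | hp := hp <;> filter_upwards [hp] with z hz <;>
    simp only [hK _ z, mul_eq_zero, sub_eq_zero, eq_comm (a := (1 : ℝ))] at hz <;> tauto

lemma ae_section_eq_one_of_codegree_le :
    ∀ᵐ p ∂μ.prod μ, codegree μ K p.1 ≤ codegree μ K p.2 →
      ∀ᵐ z ∂μ, K (p.2, z) = 1 → K (p.1, z) = 1 := by
  filter_upwards [ae_mul_one_sub_eq_zero_or h] with p hp hle
  have himp {x y : α} (hxy : ∀ᵐ z ∂μ, K (x, z) * (1 - K (z, y)) = 0) :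
      ∀ᵐ z ∂μ, K (x, z) = 1 → K (y, z) = 1 := by
    filter_upwards [hxy] with z hz hx
    rw [hx, one_mul, sub_eq_zero] at hz
    rw [hK, hz]
  obtain hp | hp := hp
  · have hsub : {z | K (p.2, z) ≠ 1} ≤ᵐ[μ] {z | K (p.1, z) ≠ 1} :=
      (himp hp).mono fun z hz => mt hz
    have heq := ae_eq_of_ae_subset_of_measure_ge hsub
      ((ENNReal.toReal_le_toReal (measure_ne_top _ _) (measure_ne_top _ _)).1 hle)
      (measurableSet_section_ne_one p.2).nullMeasurableSet (measure_ne_top _ _)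
    exact heq.symm.le.mono fun z hz => not_imp_not.1 hz
  · exact himp hp

lemma ae_ae_eq_one_of_codegree_le :
    ∀ᵐ z ∂μ, ∀ᵐ p ∂μ.prod μ, codegree μ K p.1 ≤ codegree μ K p.2 →
      K (p.2, z) = 1 → K (p.1, z) = 1 := by
  have hcod : Measurable (codegree μ K) := measurable_codegree
  have hle : MeasurableSet {q : (α × α) × α | codegree μ K q.1.1 ≤ codegree μ K q.1.2} := by
    apply measurableSet_le <;> fun_prop
  have hone : MeasurableSet (K ⁻¹' {1}) :=
    boundedMeasurable.measurable K (measurableSet_singleton 1)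
  refine (Measure.ae_ae_comm (hle.imp
    ((hone.preimage (by fun_prop : Measurable fun q : (α × α) × α => (q.1.2, q.2))).imp
      (hone.preimage (by fun_prop : Measurable fun q : (α × α) × α => (q.1.1, q.2)))))).1 ?_
  filter_upwards [ae_section_eq_one_of_codegree_le hK h] with p hp
  by_cases hpc : codegree μ K p.1 ≤ codegree μ K p.2
  · exact (hp hpc).mono fun z hz _ => hz
  · exact ae_of_all μ fun z hz => absurd hz hpc

omit h in
lemma unitCDF_codegree_le_iff (x z : α) :
    unitCDF (μ.map (codegree μ K)) (codegree μ K x) ≤ σ (codegree μ K z) ↔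
      μ.map (codegree μ K) (Iic (codegree μ K x)) ≤ μ {y | K (y, z) = 1} := by
  have hsymm : (σ (codegree μ K z) : ℝ) = μ.real {y | K (y, z) = 1} := by
    have hcompl := probReal_compl_eq_one_sub (μ := μ) (measurableSet_section_ne_one (K := K) z)
    simp only [compl_ofPred, not_not] at hcompl
    simp only [hK _ z, hcompl]
    rfl
  rw [← Subtype.coe_le_coe, hsymm]
  exact ENNReal.toReal_le_toReal (measure_ne_top _ _) (measure_ne_top _ _)

lemma ae_eq_one_iff_unitCDF_codegree_le :
    ∀ᵐ p ∂μ.prod μ, K p = 1 ↔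
      unitCDF (μ.map (codegree μ K)) (codegree μ K p.1) ≤ σ (codegree μ K p.2) := by
  have hcod : Measurable (codegree μ K) := measurable_codegree
  have hmeas : MeasurableSet {p : α × α | K p = 1 ↔
      unitCDF (μ.map (codegree μ K)) (codegree μ K p.1) ≤ σ (codegree μ K p.2)} :=
    (boundedMeasurable.measurable K (measurableSet_singleton 1)).iff (measurableSet_le
      ((unitCDF (μ.map (codegree μ K))).monotone.measurable.comp (hcod.comp measurable_fst))
      (unitInterval.continuous_symm.measurable.comp (hcod.comp measurable_snd)))
  refine Measure.measurePreserving_swap.quasiMeasurePreserving.ae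
    ((Measure.ae_prod_iff_ae_ae (p := fun q => q.swap ∈ {p : α × α | K p = 1 ↔
      unitCDF (μ.map (codegree μ K)) (codegree μ K p.1) ≤ σ (codegree μ K p.2)})
      (hmeas.preimage measurable_swap)).2 ?_)
  filter_upwards [ae_ae_eq_one_of_codegree_le hK h] with z hz
  filter_upwards [ae_mem_iff_measure_Iic_le hcod (S := {x | K (x, z) = 1}) hz] with x hx
  exact hx.trans (unitCDF_codegree_le_iff hK x z).symm

lemma ae_eq_thresholdKernel :
    K =ᵐ[μ.prod μ] boundedMeasurable.comap
      (Prod.map (codegree μ K) (codegree μ K)) (measurable_codegree.prodMap measurable_codegree)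
      (thresholdKernel (unitCDF (μ.map (codegree μ K)))) := by
  have hiff := ae_eq_one_iff_unitCDF_codegree_le hK h
  filter_upwards [ae_eq_zero_or_one hK h, hiff,
    Measure.measurePreserving_swap.quasiMeasurePreserving.ae hiff] with p hp hp₁ hp₂
  set q := Prod.map (codegree μ K) (codegree μ K) p with hq
  have hone : K p = 1 ↔ thresholdKernel (unitCDF (μ.map (codegree μ K))) q = 1 := by
    rw [thresholdKernel_eq_one_iff]
    rw [Prod.swap, hK] at hp₂
    exact ⟨fun hp => ⟨hp₁.1 hp, hp₂.1 hp⟩, fun hp => hp₁.2 hp.1⟩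
  change K p = thresholdKernel _ q
  obtain hq' | hq' := thresholdKernel_eq_zero_or_one (unitCDF (μ.map (codegree μ K))) q
  · rw [hq'] at hone ⊢
    exact hp.resolve_right fun hp => zero_ne_one (hone.1 hp)
  · rw [hq']
    exact hone.2 hq'

end Nested

/-! ### Quantile functions -/

/-- The quantile function of a probability measure on the unit interval, the lower adjoint of its
distribution function. -/
def unitQuantile (ρ : Measure I) [IsProbabilityMeasure ρ] (s : I) : I :=
  sInf {t | s ≤ unitCDF ρ t}

lemma le_unitCDF_unitQuantile (ρ : Measure I) [IsProbabilityMeasure ρ] (s : I) :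
    s ≤ unitCDF ρ (unitQuantile ρ s) := by
  have hone : unitCDF ρ 1 = 1 := Subtype.ext <| by
    have huniv : Iic (1 : I) = univ := eq_univ_of_forall fun t => unitInterval.le_one t
    exact (congrArg ρ.real huniv).trans probReal_univ
  have hne : {t | s ≤ unitCDF ρ t}.Nonempty :=
    ⟨1, (unitInterval.le_one' (t := s)).trans_eq hone.symm⟩
  obtain ⟨u, hu, hulim, hmem⟩ := exists_seq_tendsto_sInf hne (OrderBot.bddBelow _)
  have hinter : ⋂ n, Iic (u n) = Iic (unitQuantile ρ s) := by
    ext t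
    rw [mem_iInter]
    exact ⟨fun ht => ge_of_tendsto' hulim ht, fun ht n => le_trans ht (sInf_le (hmem n))⟩
  have hlim := tendsto_measure_iInter_atTop (μ := ρ)
    (fun n => (measurableSet_Iic (a := u n)).nullMeasurableSet)
    (fun m n hmn => Iic_subset_Iic.2 (hu hmn)) ⟨0, measure_ne_top _ _⟩
  rw [hinter] at hlim
  have hCDF : Tendsto (fun n => unitCDF ρ (u n)) atTop (𝓝 (unitCDF ρ (unitQuantile ρ s))) :=
    tendsto_subtype_rng.2 ((ENNReal.tendsto_toReal (measure_ne_top _ _)).comp hlim)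
  exact ge_of_tendsto' hCDF hmem

lemma gc_unitQuantile_unitCDF (ρ : Measure I) [IsProbabilityMeasure ρ] :
    GaloisConnection (unitQuantile ρ) (unitCDF ρ) := fun s _ =>
  ⟨fun h => (le_unitCDF_unitQuantile ρ s).trans ((unitCDF ρ).monotone h), fun h => sInf_le h⟩

lemma measurePreserving_unitQuantile (ρ : Measure I) [IsProbabilityMeasure ρ] :
    MeasurePreserving (unitQuantile ρ) volume ρ := by
  have hmeas := (gc_unitQuantile_unitCDF ρ).monotone_l.measurable
  have := Measure.isProbabilityMeasure_map hmeas.aemeasurable (μ := (volume : Measure I))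
  refine ⟨hmeas, Measure.ext_of_Iic _ _ fun t => ?_⟩
  have hpre : unitQuantile ρ ⁻¹' Iic t = Iic (unitCDF ρ t) :=
    Set.ext fun s => gc_unitQuantile_unitCDF ρ s t
  rw [Measure.map_apply hmeas measurableSet_Iic, hpre, unitInterval.volume_Iic]
  exact ENNReal.ofReal_toReal (measure_ne_top _ _)

lemma exists_isDecreasingZeroOne_of_alternatingFourCycle {α : Type*} [MeasurableSpace α]
    {μ : Measure α} [IsProbabilityMeasure μ] {K : boundedMeasurable (α × α)}
    (hK : ∀ x y, K (x, y) = K (y, x)) (h : alternatingFourCycle K =ᵐ[Measure.pi fun _ => μ] 0) :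
    ∃ U : boundedMeasurable (I × I),
      IsDecreasingZeroOne U ∧ WeaklyIsomorphicKernels μ volume K U := by
  set ρ := μ.map (codegree μ K)
  have hcod : MeasurePreserving (codegree μ K) μ ρ := ⟨measurable_codegree, rfl⟩
  have hq := measurePreserving_unitQuantile ρ
  refine ⟨_, (isDecreasingZeroOne_thresholdKernel (unitCDF ρ)).comap_prodMap
    (gc_unitQuantile_unitCDF ρ).monotone_l hq.measurable, fun n F => ?_⟩
  have hne : ∀ e ∈ (edgePairs F).val, e.1 ≠ e.2 := fun e he =>
    (Finset.mem_filter.1 he).2.1.ne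
  calc multigraphDensity μ K (edgePairs F).val
      = multigraphDensity μ (boundedMeasurable.comap _ (hcod.measurable.prodMap hcod.measurable)
          (thresholdKernel (unitCDF ρ))) (edgePairs F).val :=
        multigraphDensity_congr_ae (ae_eq_thresholdKernel hK h) hne
    _ = multigraphDensity ρ (thresholdKernel (unitCDF ρ)) (edgePairs F).val :=
        multigraphDensity_comap hcod _ _
    _ = multigraphDensity volume (boundedMeasurable.comap _
          (hq.measurable.prodMap hq.measurable) (thresholdKernel (unitCDF ρ)))
            (edgePairs F).val :=
        (multigraphDensity_comap hq _ _).symm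

lemma mean_alternatingFourCycle_eq_zero_iff {α : Type*} [MeasurableSpace α] {μ : Measure α}
    [IsProbabilityMeasure μ] {W : boundedMeasurable (α × α)} (hW : ∀ p, W p ∈ Icc (0 : ℝ) 1) :
    boundedMeasurable.mean (Measure.pi fun _ => μ) (alternatingFourCycle W) = 0 ↔
      alternatingFourCycle W =ᵐ[Measure.pi fun _ => μ] 0 :=
  integral_eq_zero_iff_of_nonneg (fun _ => mul_nonneg (mul_nonneg (mul_nonneg (hW _).1
    (sub_nonneg.2 (hW _).2)) (hW _).1) (sub_nonneg.2 (hW _).2))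
    (boundedMeasurable.integrable _ _)

theorem statement6_general {α : Type*} [MeasurableSpace α] (μ : Measure α)
    [IsProbabilityMeasure μ] [IsSeparable μ] (W : boundedMeasurable (α × α))
    (hW : ∀ x y, W (x, y) = W (y, x)) :
    ((∃ U : boundedMeasurable (I × I),
        IsDecreasingZeroOne U ∧ WeaklyIsomorphicKernels μ volume W U) ↔
      alternatingFourCycle W =ᵐ[Measure.pi fun _ => μ] 0) ∧
    ((∀ p, W p ∈ Icc (0 : ℝ) 1) →
      ((∃ U : boundedMeasurable (I × I),
          IsDecreasingZeroOne U ∧ WeaklyIsomorphicKernels μ volume W U) ↔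
        boundedMeasurable.mean (Measure.pi fun _ => μ) (alternatingFourCycle W) = 0)) := by
  refine (and_iff_left_of_imp fun hiff hW01 =>
    hiff.trans (mean_alternatingFourCycle_eq_zero_iff hW01).symm).2
      ⟨fun ⟨U, hU, hWU⟩ => ?_, exists_isDecreasingZeroOne_of_alternatingFourCycle hW⟩
  rw [alternatingFourCycle_ae_eq_zero_iff hW hU.symm hWU, hU.alternatingFourCycle_eq_zero]
  rfl

/-! ### Kernels on the unit square -/

/-- The restriction of a kernel to the unit square, as a bounded measurable function. -/
def unitKernel (W : ℝ → ℝ → ℝ) (hW : memW W) : boundedMeasurable (I × I) :=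
  ⟨fun p => W p.1 p.2, hW.1.comp (by fun_prop : Measurable fun p : I × I => ((p.1 : ℝ), (p.2 : ℝ))),
    hW.2.2.imp fun _ hC p => hC p.1 p.1.2 p.2 p.2.2⟩

lemma measurePreserving_coe_cube (n : ℕ) :
    MeasurePreserving (fun (x : Fin n → I) i => (x i : ℝ)) (Measure.pi fun _ => volume)
      (volume.restrict (cube n)) := by
  have hpi := measurePreserving_pi (fun _ : Fin n => (volume : Measure I))
    (fun _ => volume.restrict I01) fun _ => unitInterval.measurePreserving_coe
  rwa [← Measure.restrict_pi_pi] at hpi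

lemma setIntegral_cube {n : ℕ} {f : (Fin n → ℝ) → ℝ} (hf : Measurable f) :
    ∫ x in cube n, f x = ∫ x : Fin n → I, f (fun i => x i) ∂Measure.pi fun _ => volume := by
  have hcoe := measurePreserving_coe_cube n
  rw [← hcoe.map_eq, integral_map hcoe.measurable.aemeasurable hf.aestronglyMeasurable]

lemma homDensity_eq_multigraphDensity {W : ℝ → ℝ → ℝ} (hW : memW W) {n : ℕ}
    (F : SimpleGraph (Fin n)) :
    homDensity F W = multigraphDensity volume (unitKernel W hW) (edgePairs F).val := by
  rw [homDensity, setIntegral_cube]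
  · refine integral_congr_ae (ae_of_all _ fun x => ?_)
    exact (edgeProduct_apply (unitKernel W hW) (edgePairs F).val x).symm
  · refine Finset.measurable_prod _ fun p _ => ?_
    exact hW.1.comp (by fun_prop : Measurable fun x : Fin n → ℝ => (x p.1, x p.2))

lemma measurable_alternating {W : ℝ → ℝ → ℝ} (hW : Measurable (Function.uncurry W)) :
    Measurable fun x : Fin 4 → ℝ =>
      W (x 0) (x 1) * (1 - W (x 1) (x 2)) * W (x 2) (x 3) * (1 - W (x 3) (x 0)) := by
  have hedge (u v : Fin 4) : Measurable fun x : Fin 4 → ℝ => W (x u) (x v) :=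
    hW.comp (by fun_prop : Measurable fun x : Fin 4 → ℝ => (x u, x v))
  exact (((hedge 0 1).mul ((hedge 1 2).const_sub 1)).mul (hedge 2 3)).mul ((hedge 3 0).const_sub 1)

lemma ae_cube_alternating_iff {W : ℝ → ℝ → ℝ} (hW : memW W) :
    (∀ᵐ x ∂(volume.restrict (cube 4)),
        W (x 0) (x 1) * (1 - W (x 1) (x 2)) * W (x 2) (x 3) * (1 - W (x 3) (x 0)) = 0) ↔
      alternatingFourCycle (unitKernel W hW) =ᵐ[Measure.pi fun _ => volume] 0 := by
  have hcoe := measurePreserving_coe_cube 4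
  rw [← hcoe.map_eq]
  exact ae_map_iff hcoe.measurable.aemeasurable
    (measurable_alternating hW.1 (measurableSet_singleton 0))

lemma setIntegral_cube_alternating {W : ℝ → ℝ → ℝ} (hW : memW W) :
    (∫ x in cube 4, W (x 0) (x 1) * (1 - W (x 1) (x 2)) * W (x 2) (x 3) * (1 - W (x 3) (x 0))) =
      boundedMeasurable.mean (Measure.pi fun _ : Fin 4 => (volume : Measure I))
        (alternatingFourCycle (unitKernel W hW)) :=
  setIntegral_cube (measurable_alternating hW.1)

lemma MonotoneDecr01.memW {U : ℝ → ℝ → ℝ} (hU : MonotoneDecr01 U) : memW U :=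
  ⟨hU.1, hU.2.1, 1, fun x hx y hy => by obtain h | h := hU.2.2.1 x hx y hy <;> simp [h]⟩

lemma MonotoneDecr01.isDecreasingZeroOne {U : ℝ → ℝ → ℝ} (hU : MonotoneDecr01 U) :
    IsDecreasingZeroOne (unitKernel U hU.memW) where
  symm x y := hU.2.1 x x.2 y y.2
  eq_zero_or_one p := hU.2.2.1 p.1 p.1.2 p.2 p.2.2
  antitone p q h := hU.2.2.2 p.1 q.1 p.2 q.2 p.1.2 q.1.2 p.2.2 q.2.2 h.1 h.2

lemma IsDecreasingZeroOne.exists_monotoneDecr01 {V : boundedMeasurable (I × I)}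
    (hV : IsDecreasingZeroOne V) :
    ∃ (U : ℝ → ℝ → ℝ) (hU : MonotoneDecr01 U), unitKernel U hU.memW = V := by
  let r : ℝ → I := projIcc 0 1 zero_le_one
  have hr : Monotone r := monotone_projIcc _
  have hU : MonotoneDecr01 fun x y => V (r x, r y) :=
    ⟨(boundedMeasurable.measurable V).comp (hr.measurable.prodMap hr.measurable),
      fun x _ y _ => hV.symm _ _, fun x _ y _ => hV.eq_zero_or_one _,
      fun x x' y y' _ _ _ _ hx hy => hV.antitone (Prod.mk_le_mk.2 ⟨hr hx, hr hy⟩)⟩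
  refine ⟨_, hU, Subtype.ext (funext fun p => ?_)⟩
  exact congrArg V (Prod.ext (projIcc_val zero_le_one p.1) (projIcc_val zero_le_one p.2))

lemma exists_weaklyIsomorphic_iff {W : ℝ → ℝ → ℝ} (hW : memW W) :
    (∃ U, MonotoneDecr01 U ∧ WeaklyIsomorphic W U) ↔
      ∃ U : boundedMeasurable (I × I), IsDecreasingZeroOne U ∧
        WeaklyIsomorphicKernels volume volume (unitKernel W hW) U := by
  constructor
  · rintro ⟨U, hU, hWU⟩
    refine ⟨_, hU.isDecreasingZeroOne, fun n F => ?_⟩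
    rw [← homDensity_eq_multigraphDensity, ← homDensity_eq_multigraphDensity, hWU n F]
  · rintro ⟨V, hV, hWV⟩
    obtain ⟨U, hU, rfl⟩ := hV.exists_monotoneDecr01
    refine ⟨U, hU, fun n F => ?_⟩
    rw [homDensity_eq_multigraphDensity hW, homDensity_eq_multigraphDensity hU.memW, hWV n F]

/-- `W ∈ 𝒲` is weakly isomorphic to a monotone decreasing 0–1 valued
graphon iff `W(x₁,x₂)(1−W(x₂,x₃))W(x₃,x₄)(1−W(x₄,x₁)) = 0` a.e. on `[0,1]⁴`;
for `W ∈ 𝒲₀` this is further equivalent to the vanishing of the integral of this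
product. -/
theorem statement6 (W : ℝ → ℝ → ℝ) (hW : memW W) :
    ((∃ U, MonotoneDecr01 U ∧ WeaklyIsomorphic W U) ↔
      ∀ᵐ x ∂(volume.restrict (cube 4)),
        W (x 0) (x 1) * (1 - W (x 1) (x 2)) * W (x 2) (x 3) * (1 - W (x 3) (x 0)) = 0) ∧
    (memW0 W →
      ((∃ U, MonotoneDecr01 U ∧ WeaklyIsomorphic W U) ↔
        (∫ x in cube 4,
          W (x 0) (x 1) * (1 - W (x 1) (x 2)) * W (x 2) (x 3) * (1 - W (x 3) (x 0))) = 0)) := by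
  rw [exists_weaklyIsomorphic_iff hW, ae_cube_alternating_iff hW, setIntegral_cube_alternating hW]
  exact (statement6_general volume (unitKernel W hW) fun x y => hW.2.1 x x.2 y y.2).imp_right
    fun h hW01 => h fun p => hW01.2.2 p.1 p.1.2 p.2 p.2.2
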